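/- Let Φ : ℝⁿ → ℝ be a lower semi-continuous function, a = (a₁,…,aₙ), b = (b₁,…,bₙ) vectors with all positive entries, v₀ ∈ ℝⁿ, and P an invertible n×n real matrix; set M := PPᵀ. Fix x ∈ ℝⁿ and t > 0, and let y := Pᵀx − Pᵀv₀ with components y₁,…,yₙ. Define V(x,t) := inf over u ∈ ∏ᵢ [yᵢ−aᵢt, yᵢ+bᵢt] of {Σᵢ V(yᵢ,t; uᵢ,aᵢ,bᵢ) + Φ((Pᵀ)⁻¹u + v₀)}. Then: (i) this infimum is attained at some u*; (ii) for any such minimizer u*, the trajectory s ↦ (Pᵀ)⁻¹(γ(s; y₁,t,u₁*,a₁,b₁), …, γ(s; yₙ,t,uₙ*,aₙ,bₙ)) + v₀ minimizes the cost ∫₀ᵗ (1/2)⟨z(s)−v₀, M(z(s)−v₀)⟩ ds + Φ(z(0)) over all Lipschitz functions z : [0,t] → ℝⁿ with z(t) = x and Pᵀz'(s) ∈ ∏ᵢ [−bᵢ, aᵢ] for almost every s ∈ (0,t), and the minimal cost equals V(x,t); (iii) if moreover Φ is convex, this optimal trajectory is unique. -/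

import Mathlib

/-!
In the coordinates `q = Pᵀ (z - v₀)` the running cost `½ ⟨z - v₀, P Pᵀ (z - v₀)⟩` is `∑ᵢ ½ qᵢ²`
and the constraint reads `q' ∈ ∏ᵢ [-bᵢ, aᵢ]`, so for a fixed initial point the problem splits into
scalar ones.

In one dimension, a trajectory with slopes in `[-b, a]` that starts at `u` and ends at `x` at time
`t` must satisfy
`max (u - b s) (x - a (t - s)) ≤ q s ≤ min (u + a s) (x + b (t - s))`.
The point of this interval nearest to `0`, `clampTraj`, minimizes `q s ^ 2` for every `s`
simultaneously (`sq_clampTraj_le`), and as a function of `s` it is itself a trajectory with slopes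
in `[-b, a]` (`clampTraj_slope`); hence it is the optimal one. For `u ≥ 0`, the clamped
curve follows the lower bound throughout on `Ω₁`, the lower bound and `0` on `Ω₂`, and the lower
bound, `0` and the upper bound on `Ω₃`; the case `u < 0` is obtained by reflection. It follows
that `γ` coincides with `clampTraj` on `[0, t]` (`gammaFn_eq_clampTraj`), and
integrating the affine pieces gives the closed formulas for `V` (`Vval_eq_clampCost`).

What remains is to minimize `∑ᵢ V(yᵢ,t;uᵢ,aᵢ,bᵢ) + Ψ(u)` over the initial point `u`, where
`Ψ(u) = Φ((Pᵀ)⁻¹ u + v₀)`. The sum of the `V` is an integral depending continuously on `u`, so the objective is lower semicontinuous on a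
compact box and a minimizer exists (`exists_minimizer`). A feasible curve is Lipschitz, hence the
integral of its derivative, so its difference quotients lie in `[-bᵢ, aᵢ]` (`slope_of_ae_deriv`) and
its cost is at least the objective at its initial point (`IsTraj.reducedObj_le`). If `Φ` is convex,
uniqueness follows by comparing with the midpoint of two optimal curves (`eq_of_optimal`).
-/

open Set MeasureTheory Matrix
open scoped Classical

noncomputable section

/-- The set Ω₁, as a predicate on `(x, t, u)`, for velocity-bound parameters `a, b`. -/
def inOmega1 (a b x t u : ℝ) : Prop :=
  0 ≤ u ∧ 0 ≤ t ∧
    ((t < u / b ∧ u - b * t ≤ x ∧ x ≤ u + a * t) ∨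
      (u / b ≤ t ∧ a * t - a * u / b ≤ x ∧ x ≤ u + a * t))

/-- The set Ω₂, as a predicate on `(x, t, u)`, for velocity-bound parameters `a, b`. -/
def inOmega2 (a b x t u : ℝ) : Prop :=
  0 ≤ u ∧ 0 ≤ t ∧ u / b ≤ t ∧ 0 ≤ x ∧ x < a * t - a * u / b

/-- The set Ω₃, as a predicate on `(x, t, u)`, for velocity-bound parameters `a, b`. -/
def inOmega3 (a b x t u : ℝ) : Prop :=
  0 ≤ u ∧ 0 ≤ t ∧ u / b ≤ t ∧ u - b * t ≤ x ∧ x < 0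

/-- The value of `V` on Ω₁. -/
def V1fun (a b x t u : ℝ) : ℝ :=
  u ^ 3 / (6 * b) + x ^ 3 / (6 * a) -
    (1 / (6 * a) + 1 / (6 * b)) * ((a * u + b * x - a * b * t) / (a + b)) ^ 3

/-- The value of `V` on Ω₂. -/
def V2fun (a b x t u : ℝ) : ℝ := u ^ 3 / (6 * b) + x ^ 3 / (6 * a)

/-- The value of `V` on Ω₃. -/
def V3fun (a b x t u : ℝ) : ℝ := u ^ 3 / (6 * b) - x ^ 3 / (6 * b)

/-- The extended-real value `V(x,t;u,a,b)` for `u ≥ 0`. -/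
def Vpos (a b x t u : ℝ) : EReal :=
  if inOmega1 a b x t u then (V1fun a b x t u : EReal)
  else if inOmega2 a b x t u then (V2fun a b x t u : EReal)
  else if inOmega3 a b x t u then (V3fun a b x t u : EReal)
  else ⊤

/-- The extended-real value `V(x,t;u,a,b)`; for `u < 0` it is defined by
`V(x,t;u,a,b) := V(-x,t;-u,b,a)`. -/
def Vval (a b x t u : ℝ) : EReal :=
  if 0 ≤ u then Vpos a b x t u else Vpos b a (-x) t (-u)

/-- The trajectory formula on Ω₁. -/
def gamma1 (a b x t u s : ℝ) : ℝ :=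
  if s < (-x + u + a * t) / (a + b) then u - b * s else a * (s - t) + x

/-- The trajectory formula on Ω₂. -/
def gamma2 (a b x t u s : ℝ) : ℝ :=
  if s < u / b then u - b * s else if s < t - x / a then 0 else a * (s - t) + x

/-- The trajectory formula on Ω₃. -/
def gamma3 (a b x t u s : ℝ) : ℝ :=
  if s < u / b then u - b * s else if s < t - |x| / b then 0 else -b * (s - t) + x

/-- The optimal trajectory `γ(s;x,t,u,a,b)` for `u ≥ 0`. -/
def gammaPos (a b x t u s : ℝ) : ℝ :=
  if inOmega1 a b x t u then gamma1 a b x t u s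
  else if inOmega2 a b x t u then gamma2 a b x t u s
  else if inOmega3 a b x t u then gamma3 a b x t u s
  else 0

/-- The optimal trajectory `γ(s;x,t,u,a,b)`; for `u < 0` it is defined by
`γ(s;x,t,u,a,b) := -γ(s;-x,t,-u,b,a)`. -/
def gammaFn (a b x t u s : ℝ) : ℝ :=
  if 0 ≤ u then gammaPos a b x t u s else -gammaPos b a (-x) t (-u) s

/-- One-dimensional feasibility: Lipschitz on `[0,t]` with derivative in `[-b,a]`
almost everywhere on `(0,t)`. -/
def ctrlFeasible (a b t : ℝ) (y : ℝ → ℝ) : Prop :=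
  (∃ K : NNReal, LipschitzOnWith K y (Set.Icc 0 t)) ∧
    ∀ᵐ s ∂(volume : Measure ℝ), s ∈ Set.Ioo 0 t →
      ∃ d ∈ Set.Icc (-b) a, HasDerivAt y d s


/-- The box `∏ᵢ [yᵢ - aᵢ t, yᵢ + bᵢ t]`. -/
def boxIcc {n : ℕ} (a b y : Fin n → ℝ) (t : ℝ) : Set (Fin n → ℝ) :=
  Set.univ.pi fun i => Set.Icc (y i - a i * t) (y i + b i * t)

/-- The sum `∑ᵢ V(yᵢ,t;uᵢ,aᵢ,bᵢ)` (in the extended reals). -/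
def sumV {n : ℕ} (a b y : Fin n → ℝ) (t : ℝ) (u : Fin n → ℝ) : EReal :=
  ∑ i, Vval (a i) (b i) (y i) t (u i)

/-- The componentwise optimal trajectory. -/
def gammaVec {n : ℕ} (a b y : Fin n → ℝ) (t : ℝ) (u : Fin n → ℝ) (s : ℝ) : Fin n → ℝ :=
  fun i => gammaFn (a i) (b i) (y i) t (u i) s

/-- Feasibility for the general problem: `z` is Lipschitz on `[0,t]` and
`Pᵀ ż(s) ∈ ∏ᵢ [-bᵢ, aᵢ]` for almost every `s ∈ (0,t)`. -/
def ctrlFeasibleP {n : ℕ} (P : Matrix (Fin n) (Fin n) ℝ) (a b : Fin n → ℝ) (t : ℝ)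
    (z : ℝ → Fin n → ℝ) : Prop :=
  (∃ K : NNReal, LipschitzOnWith K z (Set.Icc 0 t)) ∧
    ∀ᵐ s ∂(volume : Measure ℝ), s ∈ Set.Ioo 0 t →
      ∃ d : Fin n → ℝ, HasDerivAt z d s ∧ ∀ i, (Pᵀ *ᵥ d) i ∈ Set.Icc (-(b i)) (a i)

/-- The total cost `∫₀ᵗ (1/2)⟨z(s)-v₀, M (z(s)-v₀)⟩ ds + Φ(z 0)` with `M = P Pᵀ`. -/
def costM {n : ℕ} (P : Matrix (Fin n) (Fin n) ℝ) (v0 : Fin n → ℝ) (t : ℝ)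
    (Φ : (Fin n → ℝ) → ℝ) (z : ℝ → Fin n → ℝ) : ℝ :=
  (∫ s in (0:ℝ)..t, (1 / 2) * ((z s - v0) ⬝ᵥ ((P * Pᵀ) *ᵥ (z s - v0)))) + Φ (z 0)

/-! ### The clamped trajectory -/

/-- The point of the reachable interval at time `s` that is closest to `0`. A trajectory with slopes
in `[-b, a]` running from `u` at time `0` to `x` at time `t` lies at time `s` between
`max (u - b s) (x - a (t - s))` and `min (u + a s) (x + b (t - s))`. When
this interval is empty the formula returns some real number without a geometric meaning. -/
def clampTraj (a b x t u s : ℝ) : ℝ :=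
  max (max (u - b * s) (x - a * (t - s))) (min (min (u + a * s) (x + b * (t - s))) 0)

lemma clampTraj_eq_lower {a b x t u s : ℝ}
    (h : 0 ≤ max (u - b * s) (x - a * (t - s))) :
    clampTraj a b x t u s = max (u - b * s) (x - a * (t - s)) :=
  max_eq_left ((min_le_right _ _).trans h)

lemma clampTraj_eq_zero {a b x t u s : ℝ}
    (h : max (u - b * s) (x - a * (t - s)) ≤ 0)
    (h' : 0 ≤ min (u + a * s) (x + b * (t - s))) : clampTraj a b x t u s = 0 := by
  unfold clampTraj
  rw [min_eq_right h', max_eq_right h]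

lemma clampTraj_eq_upper {a b x t u s : ℝ}
    (h : max (u - b * s) (x - a * (t - s)) ≤ min (u + a * s) (x + b * (t - s)))
    (h' : min (u + a * s) (x + b * (t - s)) ≤ 0) :
    clampTraj a b x t u s = min (u + a * s) (x + b * (t - s)) := by
  unfold clampTraj
  rw [min_eq_left h', max_eq_right h]

lemma clampTraj_zero {a b x t u : ℝ} (hu : u ∈ Icc (x - a * t) (x + b * t)) :
    clampTraj a b x t u 0 = u := by
  unfold clampTraj
  have h1 : max (u - b * 0) (x - a * (t - 0)) = u := by
    rw [max_eq_left] <;> linarith [hu.1]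
  have h2 : min (u + a * 0) (x + b * (t - 0)) = u := by
    rw [min_eq_left] <;> linarith [hu.2]
  rw [h1, h2]
  exact max_eq_left (min_le_left _ _)

lemma clampTraj_end {a b x t u : ℝ} (hu : u ∈ Icc (x - a * t) (x + b * t)) :
    clampTraj a b x t u t = x := by
  unfold clampTraj
  have h1 : max (u - b * t) (x - a * (t - t)) = x := by
    rw [max_eq_right] <;> linarith [hu.2]
  have h2 : min (u + a * t) (x + b * (t - t)) = x := by
    rw [min_eq_right] <;> linarith [hu.1]
  rw [h1, h2]
  exact max_eq_left (min_le_left _ _)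

lemma lower_le_upper {a b x t u s : ℝ} (ha : 0 < a) (hb : 0 < b)
    (hu : u ∈ Icc (x - a * t) (x + b * t)) (hs : s ∈ Icc 0 t) :
    max (u - b * s) (x - a * (t - s)) ≤ min (u + a * s) (x + b * (t - s)) := by
  obtain ⟨h1, h2⟩ := hu
  obtain ⟨h3, h4⟩ := hs
  have := mul_nonneg ha.le h3
  have := mul_nonneg hb.le h3
  have := mul_nonneg ha.le (sub_nonneg.2 h4)
  have := mul_nonneg hb.le (sub_nonneg.2 h4)
  refine max_le (le_min ?_ ?_) (le_min ?_ ?_) <;> linarith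

/-- The reflection `x ↦ -x` exchanges the two speed bounds. -/
lemma clampTraj_neg {a b x t u s : ℝ} (ha : 0 < a) (hb : 0 < b)
    (hu : u ∈ Icc (x - a * t) (x + b * t)) (hs : s ∈ Icc 0 t) :
    clampTraj b a (-x) t (-u) s = -clampTraj a b x t u s := by
  have h := lower_le_upper ha hb hu hs
  unfold clampTraj
  have e1 : max (-u - a * s) (-x - b * (t - s)) = -min (u + a * s) (x + b * (t - s)) := by
    rw [← max_neg_neg]; congr 1 <;> ring
  have e2 : min (-u + b * s) (-x + a * (t - s)) = -max (u - b * s) (x - a * (t - s)) := by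
    rw [← min_neg_neg]; congr 1 <;> ring
  rw [e1, e2]
  generalize max (u - b * s) (x - a * (t - s)) = L at h ⊢
  generalize min (u + a * s) (x + b * (t - s)) = U at h ⊢
  rcases le_total U 0 with h1 | h1
  · rw [min_eq_left h1, max_eq_right h, max_eq_left]
    exact (min_le_right _ _).trans (by linarith)
  · rw [min_eq_right h1]
    rcases le_total L 0 with h2 | h2
    · rw [max_eq_right h2, min_eq_right (by linarith), max_eq_right (by linarith), neg_zero]
    · rw [max_eq_left h2, min_eq_left (by linarith), max_eq_right (by linarith)]

lemma continuous_clampTraj (a b x t : ℝ) :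
    Continuous fun p : ℝ × ℝ => clampTraj a b x t p.1 p.2 := by
  unfold clampTraj; fun_prop

lemma continuous_clampTraj_right (a b x t u : ℝ) : Continuous (clampTraj a b x t u) := by
  unfold clampTraj; fun_prop

/-- Pointwise minimality: `clampTraj` has the smallest absolute value among all points of the
reachable interval. -/
lemma sq_clampTraj_le {a b x t u s q : ℝ}
    (hl : max (u - b * s) (x - a * (t - s)) ≤ q)
    (hr : q ≤ min (u + a * s) (x + b * (t - s))) :
    clampTraj a b x t u s ^ 2 ≤ q ^ 2 := by
  rcases le_total 0 (max (u - b * s) (x - a * (t - s))) with h | h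
  · rw [clampTraj_eq_lower h]
    exact pow_le_pow_left₀ h hl 2
  · rcases le_total 0 (min (u + a * s) (x + b * (t - s))) with h' | h'
    · rw [clampTraj_eq_zero h h', zero_pow two_ne_zero]; exact sq_nonneg q
    · rw [clampTraj_eq_upper (hl.trans hr) h']
      nlinarith

/-- All difference quotients of `clampTraj` lie in `[-b, a]`. -/
lemma clampTraj_slope {a b x t u r s : ℝ} (ha : 0 < a) (hb : 0 < b) (hrs : r ≤ s) :
    -(b * (s - r)) ≤ clampTraj a b x t u s - clampTraj a b x t u r ∧
      clampTraj a b x t u s - clampTraj a b x t u r ≤ a * (s - r) := by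
  have h1 := mul_nonneg ha.le (sub_nonneg.2 hrs)
  have h2 := mul_nonneg hb.le (sub_nonneg.2 hrs)
  unfold clampTraj
  constructor
  · rw [neg_le_sub_iff_le_add, ← max_add_add_right, ← max_add_add_right, ← min_add_add_right,
      ← min_add_add_right]
    refine max_le_max (max_le_max ?_ ?_) (min_le_min (min_le_min ?_ ?_) ?_) <;> linarith
  · rw [sub_le_iff_le_add', ← max_add_add_right, ← max_add_add_right, ← min_add_add_right,
      ← min_add_add_right]
    refine max_le_max (max_le_max ?_ ?_) (min_le_min (min_le_min ?_ ?_) ?_) <;> linarith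

lemma clampTraj_lipschitz {a b x t u r s : ℝ} (ha : 0 < a) (hb : 0 < b) :
    |clampTraj a b x t u s - clampTraj a b x t u r| ≤ (a + b) * |s - r| := by
  rcases le_total r s with h | h
  · obtain ⟨h1, h2⟩ := clampTraj_slope (x := x) (t := t) (u := u) ha hb h
    rw [abs_of_nonneg (sub_nonneg.2 h), abs_le]
    constructor <;> nlinarith
  · obtain ⟨h1, h2⟩ := clampTraj_slope (x := x) (t := t) (u := u) ha hb h
    rw [abs_of_nonpos (sub_nonpos.2 h), abs_le]
    constructor <;> nlinarith

/-! ### The explicit trajectory and the value function in one dimension -/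

lemma inOmega_cases {a b x t u : ℝ} (ht : 0 < t) (hu0 : 0 ≤ u)
    (hu : u ∈ Icc (x - a * t) (x + b * t)) :
    inOmega1 a b x t u ∨
      (¬ inOmega1 a b x t u ∧ inOmega2 a b x t u) ∨
      (¬ inOmega1 a b x t u ∧ ¬ inOmega2 a b x t u ∧ inOmega3 a b x t u) := by
  obtain ⟨h1, h2⟩ := hu
  by_cases H1 : inOmega1 a b x t u
  · exact Or.inl H1
  by_cases H2 : inOmega2 a b x t u
  · exact Or.inr (Or.inl ⟨H1, H2⟩)
  refine Or.inr (Or.inr ⟨H1, H2, ?_⟩)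
  unfold inOmega1 at H1
  unfold inOmega2 at H2
  unfold inOmega3
  have h5 : u / b ≤ t := by
    by_contra hc
    exact H1 ⟨hu0, ht.le, Or.inl ⟨not_le.1 hc, by linarith, by linarith⟩⟩
  have h6 : x < a * t - a * u / b := by
    by_contra hc
    exact H1 ⟨hu0, ht.le, Or.inr ⟨h5, not_lt.1 hc, by linarith⟩⟩
  refine ⟨hu0, ht.le, h5, by linarith, ?_⟩
  by_contra hc
  exact H2 ⟨hu0, ht.le, h5, not_lt.1 hc, h6⟩

/-- Description of `clampTraj` on `Ω₁`: the lower envelope is nonnegative, and its two branches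
meet at the switching time `c`. -/
lemma clampTraj_omega1 {a b x t u : ℝ} (ha : 0 < a) (hb : 0 < b)
    (h : inOmega1 a b x t u) :
    ∃ c, c = (-x + u + a * t) / (a + b) ∧ 0 ≤ c ∧ c ≤ t ∧
      (∀ s, s ≤ c → clampTraj a b x t u s = u - b * s) ∧
      (∀ s, c ≤ s → clampTraj a b x t u s = a * (s - t) + x) := by
  have hab : 0 < a + b := add_pos ha hb
  obtain ⟨hu0, -, h⟩ := h
  obtain ⟨c, hc⟩ : ∃ c, c = (-x + u + a * t) / (a + b) := ⟨_, rfl⟩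
  have hc' : c * (a + b) = -x + u + a * t := by rw [hc]; field_simp
  -- the common value of both branches at the switching time is nonnegative
  have key : x ≤ u + a * t ∧ u - b * t ≤ x ∧ 0 ≤ u - b * c := by
    have hv : (u - b * c) * (a + b) = a * u + b * x - a * b * t := by linear_combination -b * hc'
    rcases h with ⟨h1, h2, h3⟩ | ⟨h1, h2, h3⟩
    · rw [lt_div_iff₀ hb] at h1
      refine ⟨h3, h2, ?_⟩
      by_contra hneg
      nlinarith [mul_nonneg hb.le (sub_nonneg.2 h2), mul_pos hab (sub_pos.2 h1)]
    · have e : b * (a * u / b) = a * u := by field_simp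
      have h4 : 0 ≤ (u - b * c) * (a + b) := by
        rw [hv]; nlinarith [mul_le_mul_of_nonneg_left h2 hb.le]
      have h1' : u ≤ t * b := by rwa [div_le_iff₀ hb] at h1
      have h5 : 0 ≤ a * t - a * u / b := by
        have : a * u / b ≤ a * t := by
          rw [div_le_iff₀ hb]; nlinarith
        linarith
      exact ⟨h3, by nlinarith, nonneg_of_mul_nonneg_left h4 hab⟩
  obtain ⟨k1, k2, k3⟩ := key
  have hcb : u - b * c = x - a * (t - c) := by linarith
  refine ⟨c, hc, ?_, ?_, ?_, ?_⟩
  · rw [hc]; exact div_nonneg (by linarith) hab.le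
  · rw [hc, div_le_iff₀ hab]; linarith
  · intro s hs
    have h1 : x - a * (t - s) ≤ u - b * s := by nlinarith
    have h2 : 0 ≤ u - b * s := by nlinarith
    rw [clampTraj_eq_lower (le_max_of_le_left h2), max_eq_left h1]
  · intro s hs
    have h1 : u - b * s ≤ x - a * (t - s) := by nlinarith
    have h2 : 0 ≤ x - a * (t - s) := by nlinarith
    rw [clampTraj_eq_lower (le_max_of_le_right h2), max_eq_right h1]
    ring

/-- Description of `clampTraj` on `Ω₂`: descend to `0`, rest, ascend to `x`. -/
lemma clampTraj_omega2 {a b x t u : ℝ} (ha : 0 < a) (hb : 0 < b)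
    (h : inOmega2 a b x t u) :
    0 ≤ u / b ∧ u / b ≤ t - x / a ∧ t - x / a ≤ t ∧
      (∀ s, s ≤ u / b → clampTraj a b x t u s = u - b * s) ∧
      (∀ s, u / b ≤ s → s ≤ t - x / a → clampTraj a b x t u s = 0) ∧
      (∀ s, t - x / a ≤ s → clampTraj a b x t u s = a * (s - t) + x) := by
  obtain ⟨hu0, -, h1, h2, h3⟩ := h
  have p1 : 0 ≤ u / b := div_nonneg hu0 hb.le
  have p2 : 0 ≤ x / a := div_nonneg h2 ha.le
  have e1 : b * (u / b) = u := by field_simp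
  have e2 : a * (x / a) = x := by field_simp
  have e3 : a * u / b = a * (u / b) := by ring
  have p3 : u / b ≤ t - x / a := by
    rw [e3] at h3
    by_contra hc
    nlinarith
  refine ⟨p1, p3, by linarith, ?_, ?_, ?_⟩
  · intro s hs
    have h4 : 0 ≤ u - b * s := by nlinarith
    have h5 : x - a * (t - s) ≤ 0 := by nlinarith
    rw [clampTraj_eq_lower (le_max_of_le_left h4), max_eq_left (h5.trans h4)]
  · intro s hs hs'
    apply clampTraj_eq_zero
    · exact max_le (by nlinarith) (by nlinarith)
    · exact le_min (by nlinarith) (by nlinarith)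
  · intro s hs
    have h4 : u - b * s ≤ 0 := by nlinarith
    have h5 : 0 ≤ x - a * (t - s) := by nlinarith
    rw [clampTraj_eq_lower (le_max_of_le_right h5), max_eq_right (h4.trans h5)]
    ring

/-- Description of `clampTraj` on `Ω₃`: descend to `0`, rest, descend to `x`. -/
lemma clampTraj_omega3 {a b x t u : ℝ} (ha : 0 < a) (hb : 0 < b)
    (h : inOmega3 a b x t u) :
    0 ≤ u / b ∧ u / b ≤ t - |x| / b ∧ t - |x| / b ≤ t ∧
      (∀ s, s ≤ u / b → clampTraj a b x t u s = u - b * s) ∧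
      (∀ s, u / b ≤ s → s ≤ t - |x| / b → clampTraj a b x t u s = 0) ∧
      (∀ s, s ≤ t → t - |x| / b ≤ s → clampTraj a b x t u s = -b * (s - t) + x) := by
  obtain ⟨hu0, -, h1, h2, h3⟩ := h
  rw [abs_of_neg h3]
  have p1 : 0 ≤ u / b := div_nonneg hu0 hb.le
  have p2 : 0 ≤ -x / b := div_nonneg (by linarith) hb.le
  have e1 : b * (u / b) = u := by field_simp
  have e2 : b * (-x / b) = -x := by field_simp
  have p3 : u / b ≤ t - -x / b := by
    by_contra hc
    nlinarith
  refine ⟨p1, p3, by linarith, ?_, ?_, ?_⟩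
  · intro s hs
    have h4 : 0 ≤ u - b * s := by nlinarith
    have h5 : x - a * (t - s) ≤ 0 := by nlinarith
    rw [clampTraj_eq_lower (le_max_of_le_left h4), max_eq_left (h5.trans h4)]
  · intro s hs hs'
    apply clampTraj_eq_zero
    · exact max_le (by nlinarith) (by nlinarith)
    · exact le_min (by nlinarith) (by nlinarith)
  · intro s hst hs
    have h4 : x + b * (t - s) ≤ 0 := by nlinarith
    have h5 : x + b * (t - s) ≤ u + a * s := by nlinarith
    have h6 : u - b * s ≤ x + b * (t - s) := by nlinarith
    have h7 : x - a * (t - s) ≤ x + b * (t - s) := by nlinarith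
    rw [clampTraj_eq_upper, min_eq_right h5]
    · ring
    · rw [min_eq_right h5]; exact max_le h6 h7
    · rw [min_eq_right h5]; exact h4

lemma gammaPos_eq_clampTraj {a b x t u s : ℝ} (ha : 0 < a) (hb : 0 < b) (ht : 0 < t) (hu0 : 0 ≤ u)
    (hu : u ∈ Icc (x - a * t) (x + b * t)) (hs : s ∈ Icc 0 t) :
    gammaPos a b x t u s = clampTraj a b x t u s := by
  rcases inOmega_cases ht hu0 hu with h | ⟨h1, h⟩ | ⟨h1, h2, h⟩
  · obtain ⟨c, hc, -, -, k1, k2⟩ := clampTraj_omega1 ha hb h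
    rw [gammaPos, if_pos h, gamma1, ← hc]
    split_ifs with hsc
    · exact (k1 s hsc.le).symm
    · exact (k2 s (not_lt.1 hsc)).symm
  · obtain ⟨-, -, -, k1, k2, k3⟩ := clampTraj_omega2 ha hb h
    rw [gammaPos, if_neg h1, if_pos h, gamma2]
    split_ifs with h4 h5
    · exact (k1 s h4.le).symm
    · exact (k2 s (not_lt.1 h4) h5.le).symm
    · exact (k3 s (not_lt.1 h5)).symm
  · obtain ⟨-, -, -, k1, k2, k3⟩ := clampTraj_omega3 ha hb h
    rw [gammaPos, if_neg h1, if_neg h2, if_pos h, gamma3]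
    split_ifs with h4 h5
    · exact (k1 s h4.le).symm
    · exact (k2 s (not_lt.1 h4) h5.le).symm
    · exact (k3 s hs.2 (not_lt.1 h5)).symm

lemma neg_mem_box {a b x t u : ℝ} (hu : u ∈ Icc (x - a * t) (x + b * t)) :
    -u ∈ Icc (-x - b * t) (-x + a * t) :=
  ⟨by linarith [hu.2], by linarith [hu.1]⟩

lemma gammaFn_eq_clampTraj {a b x t u s : ℝ} (ha : 0 < a) (hb : 0 < b) (ht : 0 < t)
    (hu : u ∈ Icc (x - a * t) (x + b * t)) (hs : s ∈ Icc 0 t) :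
    gammaFn a b x t u s = clampTraj a b x t u s := by
  unfold gammaFn
  split_ifs with h
  · exact gammaPos_eq_clampTraj ha hb ht h hu hs
  · rw [gammaPos_eq_clampTraj hb ha ht (by linarith) (neg_mem_box hu) hs,
      clampTraj_neg ha hb hu hs, neg_neg]

/-- The running cost of `clampTraj`. -/
def clampCost (a b x t u : ℝ) : ℝ := ∫ s in (0:ℝ)..t, (1 / 2) * clampTraj a b x t u s ^ 2

lemma continuous_clampCost (a b x t : ℝ) : Continuous (clampCost a b x t) := by
  have := continuous_clampTraj a b x t
  refine intervalIntegral.continuous_parametric_intervalIntegral_of_continuous'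
    (f := fun u s => (1 / 2) * clampTraj a b x t u s ^ 2) ?_ 0 t
  exact continuous_const.mul (this.pow 2)

lemma integral_sq_affine {m k : ℝ} (hm : m ≠ 0) (p q : ℝ) :
    ∫ s in p..q, (1 / 2) * (m * s + k) ^ 2 = ((m * q + k) ^ 3 - (m * p + k) ^ 3) / (6 * m) := by
  have h : ∀ s ∈ uIcc p q,
      HasDerivAt (fun s => (m * s + k) ^ 3 / (6 * m)) ((1 / 2) * (m * s + k) ^ 2) s := by
    intro s _
    have h1 : HasDerivAt (fun s => m * s + k) m s := by
      simpa using ((hasDerivAt_id s).const_mul m).add_const k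
    refine ((h1.pow 3).div_const (6 * m)).congr_deriv ?_
    norm_num
    field_simp
    ring
  rw [intervalIntegral.integral_eq_sub_of_hasDerivAt h
    (Continuous.intervalIntegrable (by fun_prop) _ _)]
  ring

lemma integral_clampTraj_of_affine {a b x t u m k p q : ℝ} (hm : m ≠ 0) (hpq : p ≤ q)
    (h : ∀ s ∈ Icc p q, clampTraj a b x t u s = m * s + k) :
    ∫ s in p..q, (1 / 2) * clampTraj a b x t u s ^ 2
      = ((m * q + k) ^ 3 - (m * p + k) ^ 3) / (6 * m) := by
  rw [← integral_sq_affine hm]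
  apply intervalIntegral.integral_congr
  intro s hs
  rw [uIcc_of_le hpq] at hs
  simp only [h s hs]

lemma integral_clampTraj_of_zero {a b x t u p q : ℝ} (hpq : p ≤ q)
    (h : ∀ s ∈ Icc p q, clampTraj a b x t u s = 0) :
    ∫ s in p..q, (1 / 2) * clampTraj a b x t u s ^ 2 = 0 := by
  rw [show (0 : ℝ) = ∫ s in p..q, (0 : ℝ) by simp]
  apply intervalIntegral.integral_congr
  intro s hs
  rw [uIcc_of_le hpq] at hs
  simp [h s hs]

lemma intervalIntegrable_clampTraj (a b x t u p q : ℝ) :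
    IntervalIntegrable (fun s => (1 / 2) * clampTraj a b x t u s ^ 2) volume p q :=
  (continuous_const.mul ((continuous_clampTraj_right a b x t u).pow 2)).intervalIntegrable _ _

lemma clampCost_split (a b x t u p : ℝ) :
    clampCost a b x t u = (∫ s in (0:ℝ)..p, (1 / 2) * clampTraj a b x t u s ^ 2)
      + ∫ s in p..t, (1 / 2) * clampTraj a b x t u s ^ 2 :=
  (intervalIntegral.integral_add_adjacent_intervals (intervalIntegrable_clampTraj ..)
    (intervalIntegrable_clampTraj ..)).symm

lemma clampCost_split3 (a b x t u p q : ℝ) :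
    clampCost a b x t u = (∫ s in (0:ℝ)..p, (1 / 2) * clampTraj a b x t u s ^ 2)
      + (∫ s in p..q, (1 / 2) * clampTraj a b x t u s ^ 2)
      + ∫ s in q..t, (1 / 2) * clampTraj a b x t u s ^ 2 := by
  rw [clampCost_split a b x t u q, ← intervalIntegral.integral_add_adjacent_intervals
    (intervalIntegrable_clampTraj a b x t u 0 p) (intervalIntegrable_clampTraj a b x t u p q)]

lemma Vpos_eq_clampCost {a b x t u : ℝ} (ha : 0 < a) (hb : 0 < b) (ht : 0 < t) (hu0 : 0 ≤ u)
    (hu : u ∈ Icc (x - a * t) (x + b * t)) :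
    Vpos a b x t u = (clampCost a b x t u : EReal) := by
  have hb' : -b ≠ 0 := by linarith
  rcases inOmega_cases ht hu0 hu with h | ⟨h1, h⟩ | ⟨h1, h2, h⟩
  · obtain ⟨c, hc, c0, ct, k1, k2⟩ := clampTraj_omega1 ha hb h
    rw [Vpos, if_pos h, clampCost_split a b x t u c,
      integral_clampTraj_of_affine (m := -b) (k := u) hb' c0
        (fun s hs => by rw [k1 s hs.2]; ring),
      integral_clampTraj_of_affine (m := a) (k := x - a * t) ha.ne' ct
        (fun s hs => by rw [k2 s hs.1]; ring), V1fun]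
    have hab : a + b ≠ 0 := by linarith
    have e1 : -b * c + u = (a * u + b * x - a * b * t) / (a + b) := by
      rw [hc]; field_simp; ring
    have e2 : a * c + (x - a * t) = (a * u + b * x - a * b * t) / (a + b) := by
      rw [hc]; field_simp; ring
    rw [e1, e2]
    congr 1
    generalize (a * u + b * x - a * b * t) / (a + b) = w
    field_simp
    ring
  · obtain ⟨p1, p2, p3, k1, k2, k3⟩ := clampTraj_omega2 ha hb h
    rw [Vpos, if_neg h1, if_pos h, clampCost_split3 a b x t u (u / b) (t - x / a),
      integral_clampTraj_of_affine (m := -b) (k := u) hb' p1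
        (fun s hs => by rw [k1 s hs.2]; ring),
      integral_clampTraj_of_zero p2 (fun s hs => k2 s hs.1 hs.2),
      integral_clampTraj_of_affine (m := a) (k := x - a * t) ha.ne' p3
        (fun s hs => by rw [k3 s hs.1]; ring), V2fun]
    congr 1
    have e1 : -b * (u / b) + u = 0 := by field_simp; ring
    have e2 : a * (t - x / a) + (x - a * t) = 0 := by field_simp; ring
    rw [e1, e2]
    field_simp
    ring
  · obtain ⟨p1, p2, p3, k1, k2, k3⟩ := clampTraj_omega3 ha hb h
    have hx : x < 0 := h.2.2.2.2
    rw [Vpos, if_neg h1, if_neg h2, if_pos h, clampCost_split3 a b x t u (u / b) (t - |x| / b),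
      integral_clampTraj_of_affine (m := -b) (k := u) hb' p1
        (fun s hs => by rw [k1 s hs.2]; ring),
      integral_clampTraj_of_zero p2 (fun s hs => k2 s hs.1 hs.2),
      integral_clampTraj_of_affine (m := -b) (k := x + b * t) hb' p3
        (fun s hs => by rw [k3 s hs.2 hs.1]; ring), V3fun]
    congr 1
    have e1 : -b * (u / b) + u = 0 := by field_simp; ring
    have e2 : -b * (t - |x| / b) + (x + b * t) = 0 := by
      rw [abs_of_neg hx]; field_simp; ring
    rw [e1, e2]
    field_simp
    ring

/-- On the box, `V(x,t;u,a,b)` is the running cost of `clampTraj`. -/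
lemma Vval_eq_clampCost {a b x t u : ℝ} (ha : 0 < a) (hb : 0 < b) (ht : 0 < t)
    (hu : u ∈ Icc (x - a * t) (x + b * t)) :
    Vval a b x t u = (clampCost a b x t u : EReal) := by
  unfold Vval
  split_ifs with h
  · exact Vpos_eq_clampCost ha hb ht h hu
  · rw [Vpos_eq_clampCost hb ha ht (by linarith) (neg_mem_box hu)]
    congr 1
    apply intervalIntegral.integral_congr
    intro s hs
    rw [uIcc_of_le ht.le] at hs
    simp only [clampTraj_neg ha hb hu hs, neg_sq]

/-! ### Feasible curves and their difference quotients -/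

/-- A Lipschitz function is the integral of its derivative, so almost everywhere bounds on the
derivative become bounds on all increments. -/
lemma slope_of_ae_deriv {a b t : ℝ} {f : ℝ → ℝ} {K : NNReal}
    (hf : LipschitzOnWith K f (Icc 0 t))
    (hd : ∀ᵐ s ∂(volume : Measure ℝ), s ∈ Ioo 0 t → ∃ d ∈ Icc (-b) a, HasDerivAt f d s)
    {r s : ℝ} (hr : 0 ≤ r) (hrs : r ≤ s) (hst : s ≤ t) :
    -(b * (s - r)) ≤ f s - f r ∧ f s - f r ≤ a * (s - r) := by
  have hac : AbsolutelyContinuousOnInterval f r s := by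
    apply LipschitzOnWith.absolutelyContinuousOnInterval (K := K)
    rw [uIcc_of_le hrs]
    exact hf.mono (Icc_subset_Icc hr hst)
  have hae : ∀ᵐ w ∂(volume.restrict (Icc r s)), deriv f w ∈ Icc (-b) a := by
    rw [← restrict_Ioo_eq_restrict_Icc]
    rw [ae_restrict_iff' measurableSet_Ioo]
    filter_upwards [hd] with w hw hws
    obtain ⟨d, hd1, hd2⟩ := hw ⟨hr.trans_lt hws.1, hws.2.trans_le hst⟩
    rwa [hd2.deriv]
  rw [← hac.integral_deriv_eq_sub]
  constructor
  · have := intervalIntegral.integral_mono_ae_restrict hrs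
      (intervalIntegrable_const (c := -b)) hac.intervalIntegrable_deriv
      (by filter_upwards [hae] with w hw using hw.1)
    rw [intervalIntegral.integral_const, smul_eq_mul] at this
    linarith
  · have := intervalIntegral.integral_mono_ae_restrict hrs
      hac.intervalIntegrable_deriv (intervalIntegrable_const (c := a))
      (by filter_upwards [hae] with w hw using hw.2)
    rw [intervalIntegral.integral_const, smul_eq_mul] at this
    linarith

/-- The converse of `slope_of_ae_deriv`, at a single point. -/
lemma deriv_mem_of_slope {a b d s : ℝ} {f : ℝ → ℝ}
    (hf : ∀ r s, r ≤ s → -(b * (s - r)) ≤ f s - f r ∧ f s - f r ≤ a * (s - r))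
    (hd : HasDerivAt f d s) : d ∈ Icc (-b) a := by
  have h1 : Monotone (fun r => f r + b * r) := fun r s hrs => by
    have := (hf r s hrs).1
    simp only; linarith
  have h2 : Monotone (fun r => a * r - f r) := fun r s hrs => by
    have := (hf r s hrs).2
    simp only; linarith
  have e1 : HasDerivAt (fun r => f r + b * r) (d + b) s := by
    have := hd.add ((hasDerivAt_id s).const_mul b)
    rwa [mul_one] at this
  have e2 : HasDerivAt (fun r => a * r - f r) (a - d) s := by
    have := ((hasDerivAt_id s).const_mul a).sub hd
    rwa [mul_one] at this
  have k1 := h1.deriv_nonneg (x := s)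
  have k2 := h2.deriv_nonneg (x := s)
  rw [e1.deriv] at k1
  rw [e2.deriv] at k2
  exact ⟨by linarith, by linarith⟩

/-! ### The decoupled problem -/

/-- A curve in the coordinates `q = Pᵀ (z - v₀)` that ends at `y` and whose `i`-th component has all
its difference quotients on `[0, t]` in `[-bᵢ, aᵢ]`. -/
structure IsTraj {n : ℕ} (a b y : Fin n → ℝ) (t : ℝ) (q : ℝ → Fin n → ℝ) : Prop where
  end_eq : q t = y
  slope : ∀ i r s, 0 ≤ r → r ≤ s → s ≤ t →
    -(b i * (s - r)) ≤ q s i - q r i ∧ q s i - q r i ≤ a i * (s - r)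

/-- The cost `∫₀ᵗ ½ |q|² + Ψ(q 0)` in the decoupled coordinates. -/
def reducedCost {n : ℕ} (t : ℝ) (Ψ : (Fin n → ℝ) → ℝ) (q : ℝ → Fin n → ℝ) : ℝ :=
  (∫ s in (0:ℝ)..t, ∑ i, (1 / 2) * q s i ^ 2) + Ψ (q 0)

/-- The componentwise `clampTraj`. -/
def clampVec {n : ℕ} (a b y : Fin n → ℝ) (t : ℝ) (u : Fin n → ℝ) (s : ℝ) : Fin n → ℝ :=
  fun i => clampTraj (a i) (b i) (y i) t (u i) s

/-- The finite-dimensional objective `∑ᵢ V(yᵢ,t;uᵢ,aᵢ,bᵢ) + Ψ(u)`, with real values. -/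
def reducedObj {n : ℕ} (a b y : Fin n → ℝ) (t : ℝ) (Ψ : (Fin n → ℝ) → ℝ) (u : Fin n → ℝ) : ℝ :=
  (∑ i, clampCost (a i) (b i) (y i) t (u i)) + Ψ u

section Decoupled

variable {n : ℕ} {a b y : Fin n → ℝ} {t : ℝ} {Ψ : (Fin n → ℝ) → ℝ}

lemma mem_box_apply {u : Fin n → ℝ} (hu : u ∈ boxIcc a b y t) (i : Fin n) :
    u i ∈ Icc (y i - a i * t) (y i + b i * t) := hu i (mem_univ i)

lemma IsTraj.mem_box {q : ℝ → Fin n → ℝ} (hq : IsTraj a b y t q) (ht : 0 < t) :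
    q 0 ∈ boxIcc a b y t := by
  intro i _
  obtain ⟨h1, h2⟩ := hq.slope i 0 t le_rfl ht.le le_rfl
  rw [hq.end_eq] at h1 h2
  exact ⟨by linarith, by linarith⟩

lemma IsTraj.continuousOn {q : ℝ → Fin n → ℝ} (hq : IsTraj a b y t q)
    (ha : ∀ i, 0 < a i) (hb : ∀ i, 0 < b i) (i : Fin n) :
    ContinuousOn (fun s => q s i) (Icc 0 t) := by
  have : LipschitzOnWith (Real.toNNReal (a i + b i)) (fun s => q s i) (Icc 0 t) := by
    apply LipschitzOnWith.of_dist_le_mul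
    intro s hs r hr
    rw [Real.coe_toNNReal _ (add_pos (ha i) (hb i)).le, Real.dist_eq, Real.dist_eq]
    rcases le_total r s with h | h
    · obtain ⟨h1, h2⟩ := hq.slope i r s hr.1 h hs.2
      rw [abs_of_nonneg (sub_nonneg.2 h), abs_le]
      constructor <;> nlinarith [ha i, hb i]
    · obtain ⟨h1, h2⟩ := hq.slope i s r hs.1 h hr.2
      rw [abs_of_nonpos (sub_nonpos.2 h), abs_le]
      constructor <;> nlinarith [ha i, hb i]
  exact this.continuousOn

lemma IsTraj.continuousOn_energy {q : ℝ → Fin n → ℝ} (hq : IsTraj a b y t q)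
    (ha : ∀ i, 0 < a i) (hb : ∀ i, 0 < b i) :
    ContinuousOn (fun s => ∑ i, (1 / 2) * q s i ^ 2) (Icc 0 t) :=
  continuousOn_finsetSum _ fun i _ => continuousOn_const.mul ((hq.continuousOn ha hb i).pow 2)

lemma isTraj_clampVec (ha : ∀ i, 0 < a i) (hb : ∀ i, 0 < b i) {u : Fin n → ℝ}
    (hu : u ∈ boxIcc a b y t) : IsTraj a b y t (clampVec a b y t u) where
  end_eq := funext fun i => clampTraj_end (mem_box_apply hu i)
  slope i _ _ _ hrs _ := clampTraj_slope (ha i) (hb i) hrs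

lemma clampVec_zero {u : Fin n → ℝ} (hu : u ∈ boxIcc a b y t) : clampVec a b y t u 0 = u :=
  funext fun i => clampTraj_zero (mem_box_apply hu i)

lemma integral_clampVec (u : Fin n → ℝ) :
    ∫ s in (0:ℝ)..t, ∑ i, (1 / 2) * clampVec a b y t u s i ^ 2
      = ∑ i, clampCost (a i) (b i) (y i) t (u i) :=
  intervalIntegral.integral_finsetSum fun i _ =>
    intervalIntegrable_clampTraj (a i) (b i) (y i) t (u i) 0 t

lemma reducedCost_clampVec {u : Fin n → ℝ} (hu : u ∈ boxIcc a b y t) :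
    reducedCost t Ψ (clampVec a b y t u) = reducedObj a b y t Ψ u := by
  rw [reducedCost, reducedObj, integral_clampVec, clampVec_zero hu]

/-- The pointwise minimality of `clampTraj`, integrated: among the curves with a given initial
point, `clampVec` is the cheapest. -/
lemma IsTraj.reducedObj_le {q : ℝ → Fin n → ℝ} (hq : IsTraj a b y t q) (ht : 0 < t)
    (ha : ∀ i, 0 < a i) (hb : ∀ i, 0 < b i) :
    reducedObj a b y t Ψ (q 0) ≤ reducedCost t Ψ q := by
  rw [reducedObj, reducedCost, ← integral_clampVec]
  have hc := isTraj_clampVec ha hb (hq.mem_box ht)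
  gcongr
  refine intervalIntegral.integral_mono_on ht.le
    ((hc.continuousOn_energy ha hb).intervalIntegrable_of_Icc ht.le)
    ((hq.continuousOn_energy ha hb).intervalIntegrable_of_Icc ht.le) ?_
  intro s hs
  refine Finset.sum_le_sum fun i _ => ?_
  obtain ⟨h1, h2⟩ := hq.slope i 0 s le_rfl hs.1 hs.2
  obtain ⟨h3, h4⟩ := hq.slope i s t hs.1 hs.2 le_rfl
  rw [hq.end_eq] at h3 h4
  have := sq_clampTraj_le (a := a i) (b := b i) (x := y i) (t := t) (u := q 0 i) (s := s)
    (q := q s i) (max_le (by linarith) (by linarith)) (le_min (by linarith) (by linarith))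
  simp only [clampVec]
  linarith

lemma sumV_eq (ht : 0 < t) (ha : ∀ i, 0 < a i) (hb : ∀ i, 0 < b i) {u : Fin n → ℝ}
    (hu : u ∈ boxIcc a b y t) :
    sumV a b y t u + (Ψ u : EReal) = (reducedObj a b y t Ψ u : EReal) := by
  have hsum : ∀ (S : Finset (Fin n)) (f : Fin n → ℝ),
      ((∑ i ∈ S, f i : ℝ) : EReal) = ∑ i ∈ S, (f i : EReal) := by
    intro S f
    induction S using Finset.induction_on with
    | empty => simp
    | insert i S hi ih => rw [Finset.sum_insert hi, Finset.sum_insert hi, EReal.coe_add, ih]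
  rw [reducedObj, EReal.coe_add, hsum, sumV]
  congr 1
  exact Finset.sum_congr rfl fun i _ =>
    Vval_eq_clampCost (ha i) (hb i) ht (mem_box_apply hu i)

lemma exists_minimizer (ht : 0 < t) (ha : ∀ i, 0 < a i) (hb : ∀ i, 0 < b i)
    (hΨ : LowerSemicontinuous Ψ) :
    ∃ u₀ ∈ boxIcc a b y t, ∀ u ∈ boxIcc a b y t,
      reducedObj a b y t Ψ u₀ ≤ reducedObj a b y t Ψ u := by
  have hc : Continuous fun u : Fin n → ℝ => ∑ i, clampCost (a i) (b i) (y i) t (u i) :=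
    continuous_finsetSum _ fun i _ =>
      (continuous_clampCost (a i) (b i) (y i) t).comp (continuous_apply i)
  have hl : LowerSemicontinuous (reducedObj a b y t Ψ) := hc.lowerSemicontinuous.add hΨ
  have hne : (boxIcc a b y t).Nonempty := by
    refine ⟨y, fun i _ => ⟨?_, ?_⟩⟩
    · nlinarith [mul_pos (ha i) ht]
    · nlinarith [mul_pos (hb i) ht]
  have hk : IsCompact (boxIcc a b y t) := isCompact_univ_pi fun i => isCompact_Icc
  obtain ⟨u₀, h0, h1⟩ := (hl.lowerSemicontinuousOn _).exists_isMinOn hne hk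
  exact ⟨u₀, h0, fun u hu => h1 hu⟩

/-- Strict convexity of the running cost: the midpoint of two optimal curves `p`, `q` is admissible
and, for convex `Ψ`, cheaper than their common cost by at least `∫ |q - p|² / 8`, so this integral
vanishes. -/
lemma eq_of_optimal (ht : 0 < t) (ha : ∀ i, 0 < a i) (hb : ∀ i, 0 < b i)
    (hΨ : ConvexOn ℝ univ Ψ) {p q : ℝ → Fin n → ℝ} (hp : IsTraj a b y t p)
    (hq : IsTraj a b y t q)
    (hmin : ∀ w, IsTraj a b y t w → reducedCost t Ψ p ≤ reducedCost t Ψ w)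
    (heq : reducedCost t Ψ q = reducedCost t Ψ p) : ∀ s ∈ Icc 0 t, q s = p s := by
  have hm : IsTraj a b y t fun s => (1 / 2 : ℝ) • q s + (1 / 2 : ℝ) • p s := by
    refine ⟨?_, ?_⟩
    · simp only [hp.end_eq, hq.end_eq]
      ext i; simp; ring
    · intro i r s hr hrs hst
      obtain ⟨h1, h2⟩ := hp.slope i r s hr hrs hst
      obtain ⟨h3, h4⟩ := hq.slope i r s hr hrs hst
      simp only [Pi.add_apply, Pi.smul_apply, smul_eq_mul]
      constructor <;> linarith
  have h1 := hmin _ hm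
  have h2 := hΨ.2 (mem_univ (q 0)) (mem_univ (p 0)) (by norm_num : (0 : ℝ) ≤ 1 / 2)
    (by norm_num : (0 : ℝ) ≤ 1 / 2) (by norm_num)
  simp only [reducedCost, smul_eq_mul] at h1 h2 heq
  have ip := (hp.continuousOn_energy ha hb).intervalIntegrable_of_Icc ht.le (μ := volume)
  have iq := (hq.continuousOn_energy ha hb).intervalIntegrable_of_Icc ht.le (μ := volume)
  have im := (hm.continuousOn_energy ha hb).intervalIntegrable_of_Icc ht.le (μ := volume)
  have hD : ContinuousOn (fun s => ∑ i, (1 / 8) * (q s i - p s i) ^ 2) (Icc 0 t) :=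
    continuousOn_finsetSum _ fun i _ => continuousOn_const.mul
      (((hq.continuousOn ha hb i).sub (hp.continuousOn ha hb i)).pow 2)
  -- parallelogram identity
  have hpar : ∫ s in (0:ℝ)..t, ∑ i, (1 / 8) * (q s i - p s i) ^ 2
      = (1 / 2) * (∫ s in (0:ℝ)..t, ∑ i, (1 / 2) * q s i ^ 2)
        + (1 / 2) * (∫ s in (0:ℝ)..t, ∑ i, (1 / 2) * p s i ^ 2)
        - ∫ s in (0:ℝ)..t, ∑ i,
            (1 / 2) * ((1 / 2 : ℝ) • q s + (1 / 2 : ℝ) • p s) i ^ 2 := by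
    rw [← intervalIntegral.integral_const_mul, ← intervalIntegral.integral_const_mul,
      ← intervalIntegral.integral_add (iq.const_mul _) (ip.const_mul _),
      ← intervalIntegral.integral_sub ((iq.const_mul _).add (ip.const_mul _)) im]
    congr 1
    ext s
    rw [Finset.mul_sum, Finset.mul_sum, ← Finset.sum_add_distrib, ← Finset.sum_sub_distrib]
    refine Finset.sum_congr rfl fun i _ => ?_
    simp only [Pi.add_apply, Pi.smul_apply, smul_eq_mul]
    ring
  intro s hs
  by_contra hne
  obtain ⟨j, hj⟩ := Function.ne_iff.1 hne
  have hpos : 0 < ∫ s in (0:ℝ)..t, ∑ i, (1 / 8) * (q s i - p s i) ^ 2 := by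
    refine intervalIntegral.integral_pos ht hD (fun r _ => by positivity) ⟨s, hs, ?_⟩
    refine Finset.sum_pos' (fun i _ => by positivity) ⟨j, Finset.mem_univ j, ?_⟩
    have := sub_ne_zero.2 hj
    positivity
  linarith

end Decoupled

/-! ### The linear change of coordinates -/

section Transfer

variable {n : ℕ} {P : Matrix (Fin n) (Fin n) ℝ}

lemma mulVec_inv_mulVec (hP : IsUnit P.det) (v : Fin n → ℝ) : Pᵀ *ᵥ ((Pᵀ)⁻¹ *ᵥ v) = v := by
  rw [mulVec_mulVec, mul_nonsing_inv _ (by rwa [det_transpose]), one_mulVec]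

lemma inv_mulVec_mulVec (hP : IsUnit P.det) (v : Fin n → ℝ) : (Pᵀ)⁻¹ *ᵥ (Pᵀ *ᵥ v) = v := by
  rw [mulVec_mulVec, nonsing_inv_mul _ (by rwa [det_transpose]), one_mulVec]

/-- Since `M = P Pᵀ`, the quadratic form `⟨z - v₀, M (z - v₀)⟩` is `|Pᵀ (z - v₀)|²`. -/
lemma costM_eq_reducedCost (hP : IsUnit P.det) (v0 : Fin n → ℝ) (t : ℝ) (Φ : (Fin n → ℝ) → ℝ)
    (z : ℝ → Fin n → ℝ) :
    costM P v0 t Φ z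
      = reducedCost t (fun u => Φ ((Pᵀ)⁻¹ *ᵥ u + v0)) fun s => Pᵀ *ᵥ (z s - v0) := by
  simp only [costM, reducedCost, inv_mulVec_mulVec hP, sub_add_cancel]
  congr 2
  ext s
  rw [← mulVec_mulVec, dotProduct_mulVec, ← mulVec_transpose, ← Finset.mul_sum, dotProduct]
  simp only [sq]

/-- A feasible curve of the original problem becomes, after the change of coordinates, a curve
with bounded difference quotients. -/
lemma isTraj_of_feasible {a b v0 x : Fin n → ℝ} {t : ℝ} {z : ℝ → Fin n → ℝ}
    (hz : ctrlFeasibleP P a b t z) (hzt : z t = x) :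
    IsTraj a b (Pᵀ *ᵥ (x - v0)) t fun s => Pᵀ *ᵥ (z s - v0) := by
  refine ⟨by simp only [hzt], fun i r s hr hrs hst => ?_⟩
  obtain ⟨⟨K, hK⟩, hd⟩ := hz
  let L : (Fin n → ℝ) →L[ℝ] ℝ :=
    (LinearMap.proj i ∘ₗ (Pᵀ).mulVecLin : (Fin n → ℝ) →ₗ[ℝ] ℝ).toContinuousLinearMap
  have hL : ∀ v, L v = (Pᵀ *ᵥ v) i := fun v => rfl
  have := slope_of_ae_deriv (a := a i) (b := b i) (L.lipschitz.comp_lipschitzOnWith hK)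
    (by
      filter_upwards [hd] with w hw hwt
      obtain ⟨d, hd1, hd2⟩ := hw hwt
      exact ⟨L d, hd2 i, L.hasFDerivAt.comp_hasDerivAt w hd1⟩) hr hrs hst
  simpa only [mulVec_sub, Pi.sub_apply, Function.comp_apply, hL, sub_sub_sub_cancel_right]
    using this

/-- Almost everywhere differentiability of `clampVec` comes from Rademacher's theorem, so the
switching times need not be located. -/
lemma feasible_clampVec (hP : IsUnit P.det) {a b y : Fin n → ℝ} (ha : ∀ i, 0 < a i)
    (hb : ∀ i, 0 < b i) (v0 u : Fin n → ℝ) (t : ℝ) :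
    ctrlFeasibleP P a b t fun s => (Pᵀ)⁻¹ *ᵥ clampVec a b y t u s + v0 := by
  let L : (Fin n → ℝ) →L[ℝ] (Fin n → ℝ) := ((Pᵀ)⁻¹.mulVecLin).toContinuousLinearMap
  have hlip : LipschitzWith (Real.toNNReal (∑ i, (a i + b i))) (clampVec a b y t u) := by
    have hnn : ∀ i, 0 ≤ a i + b i := fun i => (add_pos (ha i) (hb i)).le
    have hs0 : 0 ≤ ∑ i, (a i + b i) := Finset.sum_nonneg fun i _ => hnn i
    apply LipschitzWith.of_dist_le_mul
    intro s r
    rw [Real.coe_toNNReal _ hs0, dist_pi_le_iff (by positivity)]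
    intro i
    rw [Real.dist_eq, Real.dist_eq]
    refine (clampTraj_lipschitz (ha i) (hb i)).trans ?_
    gcongr
    exact Finset.single_le_sum (f := fun i => a i + b i) (fun j _ => hnn j) (Finset.mem_univ i)
  constructor
  · refine ⟨‖L‖₊ * Real.toNNReal (∑ i, (a i + b i)), LipschitzWith.lipschitzOnWith ?_⟩
    intro s r
    rw [edist_add_right]
    exact (L.lipschitz.comp hlip) s r
  · filter_upwards [hlip.ae_differentiableAt_real] with s hs _
    have hd := hs.hasDerivAt
    refine ⟨L (deriv (clampVec a b y t u) s),
      (L.hasFDerivAt.comp_hasDerivAt s hd).add_const v0, fun i => ?_⟩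
    have e : Pᵀ *ᵥ L (deriv (clampVec a b y t u) s) = deriv (clampVec a b y t u) s :=
      mulVec_inv_mulVec hP _
    rw [e]
    exact deriv_mem_of_slope (fun r s hrs => clampTraj_slope (ha i) (hb i) hrs)
      (hasDerivAt_pi.1 hd i)

lemma ctrlFeasibleP_congr {a b : Fin n → ℝ} {t : ℝ} {z w : ℝ → Fin n → ℝ}
    (h : ∀ s ∈ Icc 0 t, z s = w s) (hz : ctrlFeasibleP P a b t z) : ctrlFeasibleP P a b t w := by
  obtain ⟨⟨K, hK⟩, hd⟩ := hz
  refine ⟨⟨K, fun s hs r hr => ?_⟩, ?_⟩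
  · rw [← h s hs, ← h r hr]; exact hK hs hr
  · filter_upwards [hd] with s hs hst
    obtain ⟨d, hd1, hd2⟩ := hs hst
    refine ⟨d, hd1.congr_of_eventuallyEq ?_, hd2⟩
    filter_upwards [Icc_mem_nhds hst.1 hst.2] with r hr using (h r hr).symm

lemma costM_congr {v0 : Fin n → ℝ} {t : ℝ} (ht : 0 < t) {Φ : (Fin n → ℝ) → ℝ}
    {z w : ℝ → Fin n → ℝ} (h : ∀ s ∈ Icc 0 t, z s = w s) :
    costM P v0 t Φ z = costM P v0 t Φ w := by
  unfold costM
  rw [h 0 ⟨le_rfl, ht.le⟩]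
  congr 1
  apply intervalIntegral.integral_congr
  intro s hs
  rw [uIcc_of_le ht.le] at hs
  simp only [h s hs]

end Transfer

/-- the general high-dimensional Lax-Oleinik-type formula, with
`y := Pᵀ(x - v₀)`.  (i) the infimum of
`u ↦ ∑ᵢ V(yᵢ,t;uᵢ,aᵢ,bᵢ) + Φ((Pᵀ)⁻¹u + v₀)` over `∏ᵢ [yᵢ-aᵢt, yᵢ+bᵢt]` is attained;
(ii) for any minimizer `u₀`, the trajectory
`s ↦ (Pᵀ)⁻¹ (γ(s;yᵢ,t,u₀ᵢ,aᵢ,bᵢ))ᵢ + v₀` is feasible with terminal value `x`,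
minimizes the cost over all feasible `z` with `z t = x`, and its cost equals the
infimum; (iii) if `Φ` is convex, this optimal trajectory is unique. -/
theorem laxOleinik_general_hd {n : ℕ} (a b : Fin n → ℝ)
    (ha : ∀ i, 0 < a i) (hb : ∀ i, 0 < b i)
    (v0 : Fin n → ℝ) (P : Matrix (Fin n) (Fin n) ℝ) (hP : IsUnit P.det)
    (Φ : (Fin n → ℝ) → ℝ) (hΦ : LowerSemicontinuous Φ)
    (x : Fin n → ℝ) (t : ℝ) (ht : 0 < t) :
    -- (i) the minimizer exists
    (∃ u0 ∈ boxIcc a b (Pᵀ *ᵥ (x - v0)) t, ∀ u ∈ boxIcc a b (Pᵀ *ᵥ (x - v0)) t,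
      sumV a b (Pᵀ *ᵥ (x - v0)) t u0 + (Φ ((Pᵀ)⁻¹ *ᵥ u0 + v0) : EReal)
        ≤ sumV a b (Pᵀ *ᵥ (x - v0)) t u + (Φ ((Pᵀ)⁻¹ *ᵥ u + v0) : EReal)) ∧
    -- (ii) and (iii)
    (∀ u0 ∈ boxIcc a b (Pᵀ *ᵥ (x - v0)) t,
      (∀ u ∈ boxIcc a b (Pᵀ *ᵥ (x - v0)) t,
        sumV a b (Pᵀ *ᵥ (x - v0)) t u0 + (Φ ((Pᵀ)⁻¹ *ᵥ u0 + v0) : EReal)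
          ≤ sumV a b (Pᵀ *ᵥ (x - v0)) t u + (Φ ((Pᵀ)⁻¹ *ᵥ u + v0) : EReal)) →
      -- the trajectory is feasible with terminal position x
      (ctrlFeasibleP P a b t
          (fun s => (Pᵀ)⁻¹ *ᵥ gammaVec a b (Pᵀ *ᵥ (x - v0)) t u0 s + v0) ∧
        ((Pᵀ)⁻¹ *ᵥ gammaVec a b (Pᵀ *ᵥ (x - v0)) t u0 t + v0) = x) ∧
      -- it minimizes the total cost among feasible trajectories
      (∀ z : ℝ → Fin n → ℝ, ctrlFeasibleP P a b t z → z t = x →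
        costM P v0 t Φ (fun s => (Pᵀ)⁻¹ *ᵥ gammaVec a b (Pᵀ *ᵥ (x - v0)) t u0 s + v0)
          ≤ costM P v0 t Φ z) ∧
      -- the minimal cost equals V(x,t)
      (((costM P v0 t Φ
            (fun s => (Pᵀ)⁻¹ *ᵥ gammaVec a b (Pᵀ *ᵥ (x - v0)) t u0 s + v0) : ℝ) : EReal)
        = ⨅ u ∈ boxIcc a b (Pᵀ *ᵥ (x - v0)) t,
            (sumV a b (Pᵀ *ᵥ (x - v0)) t u + (Φ ((Pᵀ)⁻¹ *ᵥ u + v0) : EReal))) ∧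
      -- (iii) uniqueness of the optimal trajectory when Φ is convex
      (ConvexOn ℝ Set.univ Φ →
        ∀ z : ℝ → Fin n → ℝ, ctrlFeasibleP P a b t z → z t = x →
          costM P v0 t Φ z
            = costM P v0 t Φ
                (fun s => (Pᵀ)⁻¹ *ᵥ gammaVec a b (Pᵀ *ᵥ (x - v0)) t u0 s + v0) →
          ∀ s ∈ Set.Icc 0 t,
            z s = (Pᵀ)⁻¹ *ᵥ gammaVec a b (Pᵀ *ᵥ (x - v0)) t u0 s + v0)) := by
  set y := Pᵀ *ᵥ (x - v0) with hy
  set Ψ : (Fin n → ℝ) → ℝ := fun u => Φ ((Pᵀ)⁻¹ *ᵥ u + v0) with hΨ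
  have hobj : ∀ u ∈ boxIcc a b y t,
      sumV a b y t u + (Φ ((Pᵀ)⁻¹ *ᵥ u + v0) : EReal) = (reducedObj a b y t Ψ u : EReal) :=
    fun u hu => sumV_eq (Ψ := Ψ) ht ha hb hu
  have hlin : Continuous fun u : Fin n → ℝ => (Pᵀ)⁻¹ *ᵥ u + v0 := by fun_prop
  constructor
  · obtain ⟨u0, h0, h1⟩ := exists_minimizer (y := y) ht ha hb (Ψ := Ψ) (hΦ.comp hlin)
    refine ⟨u0, h0, fun u hu => ?_⟩
    rw [hobj u hu, hobj u0 h0]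
    exact EReal.coe_le_coe_iff.2 (h1 u hu)
  intro u0 h0 hmin
  have hmin' : ∀ u ∈ boxIcc a b y t, reducedObj a b y t Ψ u0 ≤ reducedObj a b y t Ψ u := by
    intro u hu
    have := hmin u hu
    rw [hobj u hu, hobj u0 h0] at this
    exact EReal.coe_le_coe_iff.1 this
  have hγ : ∀ s ∈ Icc 0 t, gammaVec a b y t u0 s = clampVec a b y t u0 s := fun s hs =>
    funext fun i => gammaFn_eq_clampTraj (ha i) (hb i) ht (mem_box_apply h0 i) hs
  have hγ' : ∀ s ∈ Icc 0 t, (Pᵀ)⁻¹ *ᵥ clampVec a b y t u0 s + v0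
      = (Pᵀ)⁻¹ *ᵥ gammaVec a b y t u0 s + v0 := fun s hs => by rw [hγ s hs]
  have hclamp := isTraj_clampVec ha hb h0
  have hcost : costM P v0 t Φ (fun s => (Pᵀ)⁻¹ *ᵥ gammaVec a b y t u0 s + v0)
      = reducedCost t Ψ (clampVec a b y t u0) := by
    rw [← costM_congr ht hγ', costM_eq_reducedCost hP]
    simp only [add_sub_cancel_right, mulVec_inv_mulVec hP]
    rfl
  have hopt : ∀ q, IsTraj a b y t q →
      reducedCost t Ψ (clampVec a b y t u0) ≤ reducedCost t Ψ q := fun q hq => by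
    rw [reducedCost_clampVec h0]
    exact (hmin' _ (hq.mem_box ht)).trans (hq.reducedObj_le ht ha hb)
  refine ⟨⟨ctrlFeasibleP_congr hγ' (feasible_clampVec hP ha hb v0 u0 t), ?_⟩, ?_, ?_, ?_⟩
  · rw [hγ t ⟨ht.le, le_rfl⟩, hclamp.end_eq, hy, inv_mulVec_mulVec hP, sub_add_cancel]
  · intro z hz hzt
    rw [hcost, costM_eq_reducedCost hP]
    exact hopt _ (isTraj_of_feasible hz hzt)
  · rw [hcost, reducedCost_clampVec h0]
    refine le_antisymm (le_iInf₂ fun u hu => ?_) (iInf₂_le_of_le u0 h0 (hobj u0 h0).le)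
    rw [hobj u hu]
    exact EReal.coe_le_coe_iff.2 (hmin' u hu)
  · intro hconv z hz hzt hzc s hs
    have hΨc : ConvexOn ℝ univ Ψ := by
      refine ⟨convex_univ, fun u _ w _ α β hα hβ hαβ => ?_⟩
      have e : (Pᵀ)⁻¹ *ᵥ (α • u + β • w) + v0
          = α • ((Pᵀ)⁻¹ *ᵥ u + v0) + β • ((Pᵀ)⁻¹ *ᵥ w + v0) := by
        have : v0 = α • v0 + β • v0 := by rw [← add_smul, hαβ, one_smul]
        rw [mulVec_add, mulVec_smul, mulVec_smul]
        nth_rewrite 1 [this]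
        rw [smul_add, smul_add]
        abel
      simp only [hΨ, e]
      exact hconv.2 (mem_univ _) (mem_univ _) hα hβ hαβ
    rw [hcost, costM_eq_reducedCost hP] at hzc
    have := eq_of_optimal ht ha hb hΨc hclamp (isTraj_of_feasible hz hzt) hopt hzc s hs
    rw [hγ s hs, ← this, inv_mulVec_mulVec hP, sub_add_cancel]

end
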